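/- (Characterization of periodicity of the Jacobi–Perron algorithm.) Let m ≥ 1 and let α^{(1)}_0, ..., α^{(m)}_0 be real numbers on which the Jacobi–Perron algorithm is well defined for all steps (the fractional part α^{(m)}_n − ⌊α^{(m)}_n⌋ is nonzero for every n ≥ 0). Let a^{(i)}_n = ⌊α^{(i)}_n⌋ and let A^{(i)}_n, for i = 1, ..., m+1, be the associated convergent numerator and denominator sequences. Then the following are equivalent: (1) all m sequences of partial quotients (a^{(i)}_n) are eventually periodic (with a common preperiod and period); (2) all m+1 integer sequences (A^{(i)}_n) are linear recurrence sequences. -/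

import Mathlib

/-- The convergent numerator/denominator sequences `A⁽ⁱ⁾` of a multidimensional
continued fraction with partial quotient sequences `a⁽¹⁾, …, a⁽ᵐ⁾`, with the
index shifted by `m`:  `convA m a i n` is `A⁽ⁱ⁺¹⁾_{n - m}` of the paper. -/
def convA (m : ℕ) (a : Fin m → ℕ → ℤ) (i : Fin (m + 1)) : ℕ → ℤ
  | n =>
    if h : n ≤ m then
      if n = m then
        if hi : (i : ℕ) < m then a ⟨i, hi⟩ 0 else 1
      else
        if (i : ℕ) = m then 0 else if n = m - 1 - (i : ℕ) then 1 else 0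
    else
      (∑ j : Fin m, a j (n - m) * convA m a i (n - ((j : ℕ) + 1))) +
        convA m a i (n - (m + 1))
  termination_by n => n
  decreasing_by all_goals omega

/-- An integer sequence is a linear recurrence sequence if it satisfies, for all
sufficiently large `n`, a recurrence `s (n+k) = c₁ • s (n+k-1) + ⋯ + c_k • s n`
with constant complex coefficients. -/
def IsLinearRecurrenceSeq (s : ℕ → ℤ) : Prop :=
  ∃ k : ℕ, 1 ≤ k ∧ ∃ c : Fin k → ℂ, ∃ N : ℕ, ∀ n, N ≤ n →
    (s (n + k) : ℂ) = ∑ t : Fin k, c t * (s (n + k - 1 - (t : ℕ)) : ℂ)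

/-!
Any `m + 1` consecutive vectors of convergents `v n` form a basis, so for all `n₁` and `n₂` there
is a unique linear `f` with `f (v (n₁ + t)) = v (n₂ + t)` for `t ≤ m`. The recurrence shows that
this equality persists for `t > m` exactly as long as the partial quotients from `n₁` on agree with
those from `n₂` on.

If the partial quotients have period `q` from index `N` on, take `n₁ = N` and `n₂ = N + q`: then
`f (v n) = v (n + q)` for `n ≥ N`, and the Cayley–Hamilton theorem for `f` is a linear recurrence
for `v`. Conversely, if `v` is linearly recurrent then `f (v (n₁ + t)) = v (n₂ + t)` holds for all
`t` once it holds for finitely many, so a window of partial quotients of fixed length determines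
all later ones. Moreover the denominators increase, and a monotone linearly recurrent sequence `D`
satisfies `D (n + 1) ≤ K * D n`; this bounds the partial quotients, so by the pigeonhole principle
some window occurs twice.
-/

open Filter Polynomial

section LinearlyRecurrent

variable {R M N : Type*} [CommRing R] [AddCommGroup M] [Module R M] [AddCommGroup N] [Module R N]

variable (R M) in
/-- The left shift on sequences in an `R`-module. Polynomials act on sequences through it. -/
def seqShift : Module.End R (ℕ → M) :=
  LinearMap.funLeft R M Nat.succ

lemma seqShift_pow_apply (k : ℕ) (u : ℕ → M) (n : ℕ) : (seqShift R M ^ k) u n = u (n + k) := by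
  induction k generalizing n with
  | zero => rfl
  | succ k ih =>
    rw [pow_succ', Module.End.mul_apply]
    exact (ih (n + 1)).trans (congrArg u (Nat.add_right_comm n 1 k))

lemma aeval_seqShift_apply (p : R[X]) (u : ℕ → M) (n : ℕ) :
    aeval (seqShift R M) p u n =
      ∑ k ∈ Finset.range (p.natDegree + 1), p.coeff k • u (n + k) := by
  simp [aeval_eq_sum_range, seqShift_pow_apply]

lemma aeval_seqShift_comp (p : R[X]) (f : M →ₗ[R] N) (u : ℕ → M) :
    aeval (seqShift R N) p (fun n => f (u n)) = fun n => f (aeval (seqShift R M) p u n) := by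
  funext n
  simp [aeval_seqShift_apply]

lemma aeval_seqShift_add_left (p : R[X]) (u : ℕ → M) (k : ℕ) :
    aeval (seqShift R M) p (fun n => u (k + n)) = fun n => aeval (seqShift R M) p u (k + n) := by
  funext n
  simp [aeval_seqShift_apply, add_assoc]

lemma eq_neg_sum_of_aeval_seqShift_eq_zero {p : R[X]} (hp : p.Monic) {u : ℕ → M}
    (hu : aeval (seqShift R M) p u = 0) (n : ℕ) :
    u (n + p.natDegree) = -∑ k ∈ Finset.range p.natDegree, p.coeff k • u (n + k) := by
  have htop := congrFun hu n
  rw [aeval_seqShift_apply, Finset.sum_range_succ, hp.coeff_natDegree, one_smul] at htop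
  exact eq_neg_of_add_eq_zero_right htop

lemma eq_zero_of_aeval_seqShift_eq_zero {p : R[X]} (hp : p.Monic) {u : ℕ → M}
    (hu : aeval (seqShift R M) p u = 0) (hinit : ∀ t < p.natDegree, u t = 0) : u = 0 := by
  funext n
  induction n using Nat.strong_induction_on with
  | _ n ih =>
    rcases lt_or_ge n p.natDegree with hn | hn
    · exact hinit n hn
    · obtain ⟨e, rfl⟩ := Nat.exists_eq_add_of_le' hn
      rw [eq_neg_sum_of_aeval_seqShift_eq_zero hp hu, Finset.sum_eq_zero, neg_zero, Pi.zero_apply]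
      intro k hk
      rw [ih (e + k) (Nat.add_lt_add_left (Finset.mem_range.1 hk) e), Pi.zero_apply, smul_zero]

variable (R) in
/-- A sequence in an `R`-module is linearly recurrent if some monic polynomial in the shift
annihilates it. A recurrence valid only from index `k` on is covered: multiply its polynomial
by `X ^ k`. -/
def IsLinearlyRecurrent (u : ℕ → M) : Prop :=
  ∃ p : R[X], p.Monic ∧ aeval (seqShift R M) p u = 0

lemma isLinearlyRecurrent_add_right_iff {u : ℕ → M} (k : ℕ) :
    IsLinearlyRecurrent R (fun n => u (n + k)) ↔ IsLinearlyRecurrent R u := by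
  have hshift : (fun n => u (n + k)) = (seqShift R M ^ k) u :=
    funext fun n => (seqShift_pow_apply k u n).symm
  constructor
  · rintro ⟨p, hp, hpu⟩
    refine ⟨p * X ^ k, hp.mul (monic_X_pow k), ?_⟩
    rwa [aeval_mul, aeval_X_pow, Module.End.mul_apply, ← hshift]
  · rintro ⟨p, hp, hpu⟩
    refine ⟨p, hp, ?_⟩
    simp_rw [add_comm _ k, aeval_seqShift_add_left, hpu, Pi.zero_apply]
    rfl

lemma isLinearlyRecurrent_pi_iff {ι : Type*} [Finite ι] {u : ℕ → ι → M} :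
    IsLinearlyRecurrent R u ↔ ∀ i, IsLinearlyRecurrent R fun n => u n i := by
  constructor
  · rintro ⟨p, hp, hpu⟩ i
    refine ⟨p, hp, (aeval_seqShift_comp p (LinearMap.proj i) u).trans ?_⟩
    rw [hpu]
    rfl
  · intro h
    have := Fintype.ofFinite ι
    choose p hp hpu using h
    refine ⟨∏ i, p i, monic_prod_of_monic _ _ fun i _ => hp i, ?_⟩
    funext n i
    obtain ⟨r, hr⟩ := Finset.dvd_prod_of_mem p (Finset.mem_univ i)
    have hcomp := congrFun (aeval_seqShift_comp (∏ i, p i) (LinearMap.proj i) u) n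
    refine hcomp.symm.trans ?_
    rw [hr, mul_comm, aeval_mul, Module.End.mul_apply]
    simp only [LinearMap.proj_apply, hpu, map_zero, Pi.zero_apply]

lemma IsLinearlyRecurrent.exists_window_determines {u : ℕ → M} (hu : IsLinearlyRecurrent R u) :
    ∃ d : ℕ, ∀ (f : Module.End R M) (n₁ n₂ : ℕ),
      (∀ t < d, f (u (n₁ + t)) = u (n₂ + t)) → ∀ t, f (u (n₁ + t)) = u (n₂ + t) := by
  obtain ⟨p, hp, hpu⟩ := hu
  refine ⟨p.natDegree, fun f n₁ n₂ hwindow t => sub_eq_zero.1 ?_⟩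
  refine congrFun (eq_zero_of_aeval_seqShift_eq_zero hp
    (u := (fun t => f (u (n₁ + t))) - fun t => u (n₂ + t)) ?_
    fun t ht => sub_eq_zero.2 (hwindow t ht)) t
  rw [map_sub, aeval_seqShift_comp p f fun t => u (n₁ + t), aeval_seqShift_add_left,
    aeval_seqShift_add_left, hpu]
  simp only [Pi.zero_apply, map_zero]
  exact sub_self _

lemma isLinearlyRecurrent_of_map_eq_add {u : ℕ → M} [Module.Free R M] [Module.Finite R M]
    (f : Module.End R M) {q : ℕ} (hq : 0 < q) (hf : ∀ n, f (u n) = u (n + q)) :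
    IsLinearlyRecurrent R u := by
  have hiter (k n : ℕ) : u (n + k * q) = (f ^ k) (u n) := by
    induction k with
    | zero => simp
    | succ k ih => rw [pow_succ', Module.End.mul_apply, ← ih, hf, Nat.succ_mul, add_assoc]
  refine ⟨expand R q f.charpoly, f.charpoly_monic.expand hq, funext fun n => ?_⟩
  calc aeval (seqShift R M) (expand R q f.charpoly) u n
      = aeval f f.charpoly (u n) := by
        rw [expand_aeval, aeval_eq_sum_range, aeval_eq_sum_range]
        simp [← pow_mul, seqShift_pow_apply, mul_comm q, hiter]
    _ = 0 := by rw [f.aeval_self_charpoly, LinearMap.zero_apply]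

end LinearlyRecurrent

lemma isLinearRecurrenceSeq_iff {s : ℕ → ℤ} :
    IsLinearRecurrenceSeq s ↔ IsLinearlyRecurrent ℂ fun n => (s n : ℂ) := by
  constructor
  · rintro ⟨k, -, c, N, hrec⟩
    refine (isLinearlyRecurrent_add_right_iff N).1
      ⟨X ^ k - ∑ t : Fin k, C (c t.rev) * X ^ (t : ℕ), monic_X_pow_sub (degree_sum_fin_lt _), ?_⟩
    funext n
    simp only [map_sub, map_sum, map_mul, aeval_X_pow, aeval_C, LinearMap.sub_apply,
      LinearMap.sum_apply, Module.End.mul_apply, Module.algebraMap_end_apply, Pi.sub_apply,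
      Finset.sum_apply, Pi.smul_apply, seqShift_pow_apply, smul_eq_mul, Pi.zero_apply]
    rw [add_right_comm, hrec _ (Nat.le_add_left N n), sub_eq_zero, ← Equiv.sum_comp Fin.revPerm]
    refine Finset.sum_congr rfl fun t _ => ?_
    rw [Fin.revPerm_apply, Fin.val_rev]
    congr 3
    omega
  · rintro ⟨p, hp, hps⟩
    have hpX : (p * X).Monic := hp.mul monic_X
    have hpXs : aeval (seqShift ℂ ℂ) (p * X) (fun n => (s n : ℂ)) = 0 := by
      rw [mul_comm, aeval_mul, Module.End.mul_apply, hps, map_zero]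
    refine ⟨(p * X).natDegree, by rw [natDegree_mul_X hp.ne_zero]; omega,
      fun t => -(p * X).coeff ((p * X).natDegree - 1 - t), 0, fun n _ => ?_⟩
    rw [eq_neg_sum_of_aeval_seqShift_eq_zero hpX hpXs, ← Finset.sum_range_reflect,
      ← Finset.sum_neg_distrib, Finset.sum_range]
    refine Finset.sum_congr rfl fun t _ => ?_
    have hindex : n + (p * X).natDegree - 1 - t = n + ((p * X).natDegree - 1 - t) := by omega
    rw [hindex, neg_mul, smul_eq_mul]

/-- A sequence of vectors obeying the recurrence of the Jacobi–Perron convergents, with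
`b j n` in the role of the partial quotient `a⁽ʲ⁺¹⁾ₙ` and `v n` in the role of `A_{n - m - 1}`. -/
def IsJacobiPerronSeq {R M : Type*} [Semiring R] [AddCommMonoid M] [Module R M] {m : ℕ}
    (b : Fin m → ℕ → R) (v : ℕ → M) : Prop :=
  ∀ n, v (n + m + 1) = ∑ j : Fin m, b j n • v (n + (m - j)) + v n

namespace IsJacobiPerronSeq

lemma map_eq_of_coeff_eq {R M : Type*} [Semiring R] [AddCommMonoid M] [Module R M] {m : ℕ}
    {b : Fin m → ℕ → R} {v : ℕ → M} (h : IsJacobiPerronSeq b v) (f : Module.End R M) {n₁ n₂ L : ℕ}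
    (hinit : ∀ t ≤ m, f (v (n₁ + t)) = v (n₂ + t))
    (hb : ∀ t < L, ∀ j, b j (n₁ + t) = b j (n₂ + t)) :
    ∀ t ≤ L + m, f (v (n₁ + t)) = v (n₂ + t) := by
  intro t
  induction t using Nat.strong_induction_on with
  | _ t ih =>
    intro ht
    rcases le_or_gt t m with htm | htm
    · exact hinit t htm
    · obtain ⟨e, rfl⟩ : ∃ e, t = e + m + 1 := ⟨t - m - 1, by omega⟩
      simp only [← add_assoc]
      calc f (v (n₁ + e + m + 1))
          = ∑ j, b j (n₁ + e) • f (v (n₁ + (e + (m - j)))) + f (v (n₁ + e)) := by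
            rw [h]
            simp only [map_add, map_sum, map_smul, add_assoc]
        _ = ∑ j, b j (n₂ + e) • v (n₂ + (e + (m - j))) + v (n₂ + e) := by
            rw [ih e (by omega) (by omega)]
            congr! 2 with j
            rw [hb e (by omega) j, ih _ (by omega) (by omega)]
        _ = v (n₂ + e + m + 1) := by simp only [← add_assoc, h (n₂ + e)]

lemma coeff_eq_of_map_eq {R M : Type*} [Ring R] [AddCommGroup M] [Module R M] {m : ℕ}
    {b : Fin m → ℕ → R} {v : ℕ → M} (h : IsJacobiPerronSeq b v) {f : Module.End R M} {n₁ n₂ : ℕ}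
    (hli : ∀ n, LinearIndependent R fun r : Fin (m + 1) => v (n + (m - r)))
    (hf : ∀ t, f (v (n₁ + t)) = v (n₂ + t)) (j : Fin m) (t : ℕ) :
    b j (n₁ + t) = b j (n₂ + t) := by
  have hsum : ∑ j : Fin m, b j (n₁ + t) • v (n₂ + t + (m - j)) =
      ∑ j : Fin m, b j (n₂ + t) • v (n₂ + t + (m - j)) := by
    have htop : f (v (n₁ + t + m + 1)) = v (n₂ + t + m + 1) := by
      simpa only [add_assoc] using hf (t + m + 1)
    rw [h, h, map_add, hf t, map_sum] at htop
    simpa only [map_smul, add_assoc, hf] using add_right_cancel htop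
  have hli' : LinearIndependent R fun j : Fin m => v (n₂ + t + (m - j)) :=
    (hli (n₂ + t)).comp Fin.castSucc (Fin.castSucc_injective m)
  rw [← sub_eq_zero, ← Finset.sum_sub_distrib] at hsum
  simp only [← sub_smul] at hsum
  exact sub_eq_zero.1 (Fintype.linearIndependent_iff.1 hli' _ hsum j)

section Field

variable {K V : Type*} [Field K] [AddCommGroup V] [Module K V] {m : ℕ} {b : Fin m → ℕ → K}
  {v : ℕ → V} (h : IsJacobiPerronSeq b v)

include h

lemma linearIndependent_window (h₀ : LinearIndependent K fun r : Fin (m + 1) => v (m - r))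
    (n : ℕ) : LinearIndependent K fun r : Fin (m + 1) => v (n + (m - r)) := by
  induction n with
  | zero => simpa only [zero_add] using h₀
  | succ n ih =>
    set w : Fin m → V := fun j => v (n + (m - j)) with hw
    have hsnoc : (fun r : Fin (m + 1) => v (n + (m - r))) = Fin.snoc w (v n) := by
      funext r
      refine Fin.lastCases ?_ (fun j => ?_) r <;> simp [hw]
    have hcons : (fun r : Fin (m + 1) => v (n + 1 + (m - r))) = Fin.cons (v (n + m + 1)) w := by
      funext r
      refine Fin.cases ?_ (fun j => ?_) r
      · simp [add_right_comm]
      · simp only [hw, Fin.cons_succ, Fin.val_succ]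
        congr 1
        omega
    rw [hsnoc, linearIndependent_finSnoc] at ih
    rw [hcons, linearIndependent_finCons, h]
    refine ⟨ih.1, fun hmem => ih.2 ((Submodule.add_mem_iff_right _ ?_).1 hmem)⟩
    exact Submodule.sum_mem _ fun j _ =>
      Submodule.smul_mem _ _ (Submodule.subset_span (Set.mem_range_self j))

lemma exists_end_map_window (h₀ : LinearIndependent K fun r : Fin (m + 1) => v (m - r))
    (n₁ n₂ : ℕ) : ∃ f : Module.End K V, ∀ t ≤ m, f (v (n₁ + t)) = v (n₂ + t) := by
  have hli := h.linearIndependent_window h₀ n₁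
  obtain ⟨f, hf⟩ := LinearMap.exists_extend
    ((Module.Basis.span hli).constr K fun r : Fin (m + 1) => v (n₂ + (m - r)))
  refine ⟨f, fun t ht => ?_⟩
  let r : Fin (m + 1) := ⟨m - t, by omega⟩
  have hr := (Module.Basis.span hli).constr_basis K (fun r : Fin (m + 1) => v (n₂ + (m - r))) r
  rw [← hf, LinearMap.comp_apply, Submodule.subtype_apply, Module.Basis.span_apply] at hr
  convert hr using 3 <;> simp only [r] <;> omega

lemma isLinearlyRecurrent_of_periodic [FiniteDimensional K V]
    (h₀ : LinearIndependent K fun r : Fin (m + 1) => v (m - r)) {N q : ℕ} (hq : 0 < q)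
    (hper : ∀ j, ∀ n, N ≤ n → b j (n + q) = b j n) : IsLinearlyRecurrent K v := by
  obtain ⟨f, hf⟩ := h.exists_end_map_window h₀ N (N + q)
  have hf' (t : ℕ) : f (v (N + t)) = v (N + q + t) := by
    refine h.map_eq_of_coeff_eq f hf (L := t) (fun s _ j => ?_) t (Nat.le_add_right t m)
    rw [add_right_comm, hper j _ (Nat.le_add_right N s)]
  refine (isLinearlyRecurrent_add_right_iff N).1 (isLinearlyRecurrent_of_map_eq_add f hq ?_)
  intro n
  rw [add_comm n, hf', add_right_comm, add_comm N, add_right_comm]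

lemma exists_window_determines_coeff
    (h₀ : LinearIndependent K fun r : Fin (m + 1) => v (m - r)) (hv : IsLinearlyRecurrent K v) :
    ∃ d : ℕ, ∀ n₁ n₂ : ℕ, (∀ t < d, ∀ j, b j (n₁ + t) = b j (n₂ + t)) →
      ∀ j t, b j (n₁ + t) = b j (n₂ + t) := by
  obtain ⟨d, hd⟩ := hv.exists_window_determines
  refine ⟨d, fun n₁ n₂ hwindow => ?_⟩
  obtain ⟨f, hf⟩ := h.exists_end_map_window h₀ n₁ n₂
  have hfd := h.map_eq_of_coeff_eq f hf hwindow
  exact h.coeff_eq_of_map_eq (h.linearIndependent_window h₀)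
    (hd f n₁ n₂ fun t ht => hfd t (by omega))

end Field

end IsJacobiPerronSeq

lemma eventually_periodic_of_window_determines {X : Type*} {s : ℕ → X}
    (hfin : (Set.range s).Finite) {d : ℕ}
    (hdet : ∀ n₁ n₂, (∀ t < d, s (n₁ + t) = s (n₂ + t)) → ∀ t, s (n₁ + t) = s (n₂ + t)) :
    ∃ N q : ℕ, 0 < q ∧ ∀ n, N ≤ n → s (n + q) = s n := by
  have : Finite (Set.range s) := hfin
  obtain ⟨n₁, n₂, hne, heq⟩ := Finite.exists_ne_map_eq_of_infinite
    fun (n : ℕ) (t : Fin d) => (⟨s (n + t), Set.mem_range_self _⟩ : Set.range s)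
  wlog hlt : n₁ < n₂ generalizing n₁ n₂
  · exact this n₂ n₁ hne.symm heq.symm (by omega)
  refine ⟨n₁, n₂ - n₁, by omega, fun n hn => ?_⟩
  have hper := hdet n₁ n₂ (fun t ht => congrArg Subtype.val (congrFun heq ⟨t, ht⟩)) (n - n₁)
  rw [Nat.add_sub_cancel' hn] at hper
  rw [hper]
  congr 1
  omega

section Convergents

variable {m : ℕ} (a : Fin m → ℕ → ℤ) (i : Fin (m + 1))

lemma convA_of_lt {n : ℕ} (hn : n < m) :
    convA m a i n = if (i : ℕ) = m then 0 else if n = m - 1 - (i : ℕ) then 1 else 0 := by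
  rw [convA, dif_pos hn.le, if_neg hn.ne]

lemma convA_self : convA m a i m = if hi : (i : ℕ) < m then a ⟨i, hi⟩ 0 else 1 := by
  rw [convA, dif_pos le_rfl, if_pos rfl]

lemma convA_add_succ (n : ℕ) :
    convA m a i (n + m + 1) =
      ∑ j : Fin m, a j (n + 1) * convA m a i (n + (m - j)) + convA m a i n := by
  rw [convA, dif_neg (by omega)]
  congr 1
  · refine Finset.sum_congr rfl fun j _ => ?_
    congr 2 <;> omega
  · congr 1
    omega

/-- The vectors of convergents, `convVec a n` being `(A⁽¹⁾_{n - m - 1}, …, A⁽ᵐ⁺¹⁾_{n - m - 1})` in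
the paper's indexing. The extra vector at `n = 0` is the one that extends the recurrence backwards
to `A₀`, and it makes the first `m + 1` vectors the standard basis in reverse order. -/
def convVec : ℕ → Fin (m + 1) → ℂ
  | 0 => Pi.single (Fin.last m) 1
  | n + 1 => fun i => convA m a i n

lemma convVec_sub (r : Fin (m + 1)) : convVec a (m - r) = Pi.single r 1 := by
  refine Fin.lastCases ?_ (fun j => ?_) r
  · simp [convVec]
  · obtain ⟨e, he⟩ : ∃ e, m - j = e + 1 := ⟨m - j - 1, by omega⟩
    funext i
    simp only [Fin.val_castSucc, he, convVec, convA_of_lt a i (show e < m by omega)]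
    simp only [Pi.single_apply, Fin.ext_iff, Fin.val_castSucc]
    split_ifs <;> first | omega | simp

lemma linearIndependent_convVec :
    LinearIndependent ℂ fun r : Fin (m + 1) => convVec a (m - r) := by
  simp only [convVec_sub]
  exact Pi.linearIndependent_single_one (Fin (m + 1)) ℂ

lemma isJacobiPerronSeq_convVec :
    IsJacobiPerronSeq (fun j n => (a j n : ℂ)) (convVec a) := by
  rintro (_ | n)
  · have hinit (j : Fin m) : convVec a (0 + (m - j)) = Pi.single j.castSucc 1 := by
      simpa using convVec_sub a j.castSucc
    simp only [hinit]
    funext i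
    refine Fin.lastCases ?_ (fun j => ?_) i
    · simp [convVec, convA_self]
    · simp [convVec, convA_self, Pi.single_apply]
  · funext i
    have hshift (e : ℕ) : convVec a (n + 1 + e) i = convA m a i (n + e) := by
      rw [add_right_comm, convVec]
    have htop : convVec a (n + 1 + m + 1) i = convA m a i (n + m + 1) := by
      rw [add_assoc, hshift, ← add_assoc]
    rw [htop, convA_add_succ, Pi.add_apply, Finset.sum_apply]
    simp only [Pi.smul_apply, smul_eq_mul, hshift]
    push_cast
    rfl

lemma isLinearlyRecurrent_convVec_iff :
    IsLinearlyRecurrent ℂ (convVec a) ↔ ∀ i, IsLinearRecurrenceSeq (convA m a i) := by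
  simp only [isLinearRecurrenceSeq_iff]
  rw [← isLinearlyRecurrent_add_right_iff 1, isLinearlyRecurrent_pi_iff]
  rfl

end Convergents

/-- By monotonicity every earlier term of the recurrence is at most the last one. -/
lemma IsLinearRecurrenceSeq.exists_le_mul_of_monotone {s : ℕ → ℤ} (hs : IsLinearRecurrenceSeq s)
    (hmono : Monotone s) (hnonneg : 0 ≤ s) : ∃ K : ℕ, ∀ᶠ n in atTop, s (n + 1) ≤ K * s n := by
  obtain ⟨k, hk, c, N, hrec⟩ := hs
  obtain ⟨K, hK⟩ := exists_nat_ge (∑ t, ‖c t‖)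
  refine ⟨K, eventually_atTop.2 ⟨N + k - 1, fun n hn => ?_⟩⟩
  obtain ⟨e, rfl⟩ : ∃ e, n = e + k - 1 := ⟨n + 1 - k, by omega⟩
  have habs (n : ℕ) : ‖(s n : ℂ)‖ = s n := by
    rw [Complex.norm_intCast, abs_of_nonneg (by exact_mod_cast hnonneg n)]
  rw [Nat.sub_add_cancel (by omega), ← Int.cast_le (R := ℝ)]
  calc (s (e + k) : ℝ) = ‖∑ t, c t * (s (e + k - 1 - t) : ℂ)‖ := by
        rw [← habs, hrec e (by omega)]
    _ ≤ ∑ t, ‖c t‖ * s (e + k - 1) := by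
        refine (norm_sum_le _ _).trans (Finset.sum_le_sum fun t _ => ?_)
        rw [norm_mul, habs]
        gcongr
        exact hmono (Nat.sub_le _ _)
    _ ≤ ((K * s (e + k - 1) : ℤ) : ℝ) := by
        rw [← Finset.sum_mul]
        push_cast
        gcongr
        exact_mod_cast hnonneg _

section Denominators

variable {m : ℕ} {a : Fin m → ℕ → ℤ} (ha : ∀ j n, 0 ≤ a j (n + 1))

include ha

lemma convA_last_nonneg : 0 ≤ convA m a (Fin.last m) := by
  intro n
  induction n using Nat.strong_induction_on with
  | _ n ih =>
    rcases lt_trichotomy n m with hn | rfl | hn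
    · simp [convA_of_lt a _ hn]
    · simp [convA_self]
    · obtain ⟨e, rfl⟩ : ∃ e, n = e + m + 1 := ⟨n - m - 1, by omega⟩
      rw [convA_add_succ]
      exact add_nonneg (Finset.sum_nonneg fun j _ => mul_nonneg (ha j e) (ih _ (by omega)))
        (ih _ (by omega))

lemma mul_convA_last_le (j : Fin m) (n : ℕ) :
    a j (n + 1) * convA m a (Fin.last m) (n + (m - j)) ≤ convA m a (Fin.last m) (n + m + 1) := by
  have hnonneg := convA_last_nonneg ha
  rw [convA_add_succ]
  refine le_add_of_le_of_nonneg ?_ (hnonneg n)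
  exact Finset.single_le_sum (f := fun j => a j (n + 1) * convA m a (Fin.last m) (n + (m - j)))
    (fun j _ => mul_nonneg (ha j n) (hnonneg _)) (Finset.mem_univ j)

variable (hm : 0 < m) (ha₀ : ∀ n, 1 ≤ a ⟨0, hm⟩ (n + 1))

include ha₀

lemma monotone_convA_last : Monotone (convA m a (Fin.last m)) := by
  refine monotone_nat_of_le_succ fun n => ?_
  rcases lt_or_ge n m with hn | hn
  · simpa [convA_of_lt a _ hn] using convA_last_nonneg ha (n + 1)
  · obtain ⟨e, rfl⟩ := Nat.exists_eq_add_of_le' hn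
    exact (le_mul_of_one_le_left (convA_last_nonneg ha _) (ha₀ e)).trans
      (mul_convA_last_le ha ⟨0, hm⟩ e)

lemma convA_last_pos {n : ℕ} (hn : m ≤ n) : 0 < convA m a (Fin.last m) n := by
  refine lt_of_lt_of_le ?_ (monotone_convA_last ha hm ha₀ hn)
  simp [convA_self]

lemma bddAbove_partialQuotient (hrec : IsLinearRecurrenceSeq (convA m a (Fin.last m)))
    (j : Fin m) : BddAbove (Set.range (a j)) := by
  obtain ⟨K, hK⟩ := hrec.exists_le_mul_of_monotone (monotone_convA_last ha hm ha₀)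
    (convA_last_nonneg ha)
  obtain ⟨N, hN⟩ := eventually_atTop.1 hK
  set D := convA m a (Fin.last m)
  have hpow (n i : ℕ) (hn : N ≤ n) : D (n + i) ≤ K ^ i * D n := by
    induction i with
    | zero => simp
    | succ i ih =>
      calc D (n + i + 1) ≤ K * D (n + i) := hN _ (by omega)
        _ ≤ K * (K ^ i * D n) := by gcongr
        _ = K ^ (i + 1) * D n := by ring
  refine (isBoundedUnder_of_eventually_le (a := (K : ℤ) ^ ((j : ℕ) + 1))
    (eventually_atTop.2 ⟨N + m + 1, fun n hn => ?_⟩)).bddAbove_range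
  obtain ⟨e, rfl⟩ : ∃ e, n = e + 1 := ⟨n - 1, by omega⟩
  have hD : 0 < D (e + (m - j)) := convA_last_pos ha hm ha₀ (by omega)
  refine le_of_mul_le_mul_right ?_ hD
  calc a j (e + 1) * D (e + (m - j)) ≤ D (e + m + 1) := mul_convA_last_le ha j e
    _ = D (e + (m - j) + (j + 1)) := by congr 1; omega
    _ ≤ K ^ ((j : ℕ) + 1) * D (e + (m - j)) := hpow _ _ (by omega)

lemma finite_range_partialQuotients (hrec : IsLinearRecurrenceSeq (convA m a (Fin.last m))) :
    (Set.range fun n j => a j n).Finite := by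
  refine BddBelow.finite_of_bddAbove (bddBelow_range_pi.2 fun j => ?_)
    (bddAbove_range_pi.2 (bddAbove_partialQuotient ha hm ha₀ hrec))
  refine (isBoundedUnder_of_eventually_ge (a := 0)
    (eventually_atTop.2 ⟨1, fun n hn => ?_⟩)).bddBelow_range
  obtain ⟨e, rfl⟩ := Nat.exists_eq_add_of_le' hn
  exact ha j e

end Denominators

theorem jacobiPerron_periodic_iff_linear_recurrence_general {m : ℕ} (hm : 0 < m)
    {a : Fin m → ℕ → ℤ} (ha : ∀ j n, 0 ≤ a j (n + 1)) (ha₀ : ∀ n, 1 ≤ a ⟨0, hm⟩ (n + 1)) :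
    (∃ N q : ℕ, 1 ≤ q ∧ ∀ j : Fin m, ∀ n, N ≤ n → a j (n + q) = a j n) ↔
      ∀ i : Fin (m + 1), IsLinearRecurrenceSeq (convA m a i) := by
  have hjp := isJacobiPerronSeq_convVec a
  have hli := linearIndependent_convVec a
  constructor
  · rintro ⟨N, q, hq, hper⟩
    refine (isLinearlyRecurrent_convVec_iff a).1
      (hjp.isLinearlyRecurrent_of_periodic hli hq fun j n hn => congrArg Int.cast (hper j n hn))
  · intro hrec
    obtain ⟨d, hd⟩ := hjp.exists_window_determines_coeff hli
      ((isLinearlyRecurrent_convVec_iff a).2 hrec)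
    simp only [Int.cast_inj] at hd
    obtain ⟨N, q, hq, hper⟩ := eventually_periodic_of_window_determines
      (finite_range_partialQuotients ha hm ha₀ (hrec (Fin.last m)))
      fun n₁ n₂ hwindow t => funext fun j => hd n₁ n₂ (fun t ht => congrFun (hwindow t ht)) j t
    exact ⟨N, q, hq, fun j n hn => congrFun (hper n hn) j⟩

/-- Characterization of periodicity of the Jacobi–Perron algorithm: if the algorithm
is well defined on `α⁽¹⁾₀, …, α⁽ᵐ⁾₀`, then the sequences of partial quotients
`a⁽ⁱ⁾ₙ = ⌊α⁽ⁱ⁾ₙ⌋` are all eventually periodic (with a common preperiod and period)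
if and only if all the `m + 1` sequences of convergent numerators and denominators
`A⁽¹⁾, …, A⁽ᵐ⁺¹⁾` are linear recurrence sequences. -/
theorem jacobiPerron_periodic_iff_linear_recurrence (m : ℕ) (hm : 1 ≤ m)
    (α : ℕ → Fin m → ℝ)
    (hfrac : ∀ n : ℕ, Int.fract (α n ⟨m - 1, by omega⟩) ≠ 0)
    (hstep1 : ∀ n : ℕ,
      α (n + 1) ⟨0, by omega⟩ = 1 / Int.fract (α n ⟨m - 1, by omega⟩))
    (hstep2 : ∀ n : ℕ, ∀ i : Fin m, 0 < (i : ℕ) →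
      α (n + 1) i =
        Int.fract (α n ⟨(i : ℕ) - 1, (Nat.sub_le _ _).trans_lt i.isLt⟩) /
          Int.fract (α n ⟨m - 1, by omega⟩)) :
    (∃ N q : ℕ, 1 ≤ q ∧ ∀ j : Fin m, ∀ n, N ≤ n → ⌊α (n + q) j⌋ = ⌊α n j⌋) ↔
      (∀ i : Fin (m + 1),
        IsLinearRecurrenceSeq (fun n => convA m (fun j n => ⌊α n j⌋) i n)) := by
  have hpos (n : ℕ) : 0 < Int.fract (α n ⟨m - 1, by omega⟩) :=
    (Int.fract_nonneg _).lt_of_ne' (hfrac n)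
  refine jacobiPerron_periodic_iff_linear_recurrence_general (a := fun j n => ⌊α n j⌋) hm
    (fun j n => Int.floor_nonneg.2 ?_) fun n => Int.le_floor.2 ?_
  · rcases Nat.eq_zero_or_pos (j : ℕ) with hj | hj
    · rw [show j = ⟨0, hm⟩ from Fin.ext hj, hstep1]
      exact one_div_nonneg.2 (hpos n).le
    · rw [hstep2 n j hj]
      exact div_nonneg (Int.fract_nonneg _) (hpos n).le
  · rw [hstep1, Int.cast_one]
    exact one_le_one_div (hpos n) (Int.fract_lt_one _).le
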